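/- For every acyclic net AN, the following three statements are equivalent: (1) AN is well-formed; (2) each transition of AN occurs in at least one scenario of AN, and each step sequence of AN is a step sequence of at least one scenario of AN; (3) each transition of AN occurs in at least one scenario of AN, and each firing sequence of AN is a firing sequence of at least one scenario of AN. -/

import Mathlib

/-- A net: a triple of places, transitions, and a flow relation. -/
structure Net (α : Type*) where
  places : Set α
  transitions : Set α
  flow : α → α → Prop

namespace Net

variable {α : Type*}

/-- The set of direct predecessors (preset) of a node. -/
def pre (N : Net α) (x : α) : Set α := {z | N.flow z x}

/-- The set of direct successors (postset) of a node. -/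
def post (N : Net α) (x : α) : Set α := {z | N.flow x z}

/-- Preset of a set of nodes. -/
def preSet (N : Net α) (X : Set α) : Set α := ⋃ x ∈ X, N.pre x

/-- Postset of a set of nodes. -/
def postSet (N : Net α) (X : Set α) : Set α := ⋃ x ∈ X, N.post x

/-- Initial places: places with empty preset. -/
def initPlaces (N : Net α) : Set α := {p ∈ N.places | N.pre p = ∅}

/-- Final places: places with empty postset. -/
def finPlaces (N : Net α) : Set α := {p ∈ N.places | N.post p = ∅}

/-- An acyclic net: places and transitions are disjoint finite sets, places nonempty,
the flow relation relates only places to transitions and vice versa, is acyclic, and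
every transition has at least one pre-place and one post-place. -/
def IsAcyclicNet (N : Net α) : Prop :=
  N.places.Finite ∧ N.transitions.Finite ∧
  Disjoint N.places N.transitions ∧
  (∀ x y, N.flow x y →
    (x ∈ N.places ∧ y ∈ N.transitions) ∨ (x ∈ N.transitions ∧ y ∈ N.places)) ∧
  N.places.Nonempty ∧
  (∀ x, ¬ Relation.TransGen N.flow x x) ∧
  (∀ t ∈ N.transitions, (N.pre t).Nonempty ∧ (N.post t).Nonempty)

/-- An occurrence net: an acyclic net with `|pre p| ≤ 1` and `|post p| ≤ 1` for each place. -/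
def IsOccurrenceNet (N : Net α) : Prop :=
  IsAcyclicNet N ∧ ∀ p ∈ N.places, (N.pre p).Subsingleton ∧ (N.post p).Subsingleton

/-- A backward deterministic acyclic net: an acyclic net with `|pre p| ≤ 1` for each place. -/
def IsBDAN (N : Net α) : Prop :=
  IsAcyclicNet N ∧ ∀ p ∈ N.places, (N.pre p).Subsingleton

/-- `N` is a subnet of `M`: nonempty set of places included, transitions included,
flow is the restriction of that of `M`, and every transition of `N` retains its
full preset and postset from `M`. -/
def IsSubnet (N M : Net α) : Prop :=
  N.places.Nonempty ∧ N.places ⊆ M.places ∧ N.transitions ⊆ M.transitions ∧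
  (∀ x y, N.flow x y ↔ M.flow x y ∧
    ((x ∈ N.places ∧ y ∈ N.transitions) ∨ (x ∈ N.transitions ∧ y ∈ N.places))) ∧
  (∀ t ∈ N.transitions, N.pre t = M.pre t ∧ N.post t = M.post t)

/-- `N` is a co-initial subnet of `M` : a subnet with the same initial places. -/
def CoInitial (N M : Net α) : Prop := IsSubnet N M ∧ N.initPlaces = M.initPlaces

/-- A step: a nonempty set of transitions with pairwise disjoint presets. -/
def IsStep (N : Net α) (U : Set α) : Prop :=
  U.Nonempty ∧ U ⊆ N.transitions ∧ ∀ t ∈ U, ∀ u ∈ U, t ≠ u → N.pre t ∩ N.pre u = ∅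

/-- A step `U` is enabled at marking `M` if all its pre-places are in `M`. -/
def Enabled (N : Net α) (M U : Set α) : Prop := IsStep N U ∧ N.preSet U ⊆ M

/-- Executing an enabled step `U` at `M` yields `M' = (M ∪ post U) \ pre U`. -/
def StepTrans (N : Net α) (M U M' : Set α) : Prop :=
  Enabled N M U ∧ M' = (M ∪ N.postSet U) \ N.preSet U

/-- Step sequences from a marking to a marking. -/
inductive StepSeqFrom (N : Net α) : Set α → List (Set α) → Set α → Prop
  | nil (M : Set α) : StepSeqFrom N M [] M
  | cons {M U M' σ M''} : StepTrans N M U M' → StepSeqFrom N M' σ M'' →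
      StepSeqFrom N M (U :: σ) M''

/-- The initial marking: the set of initial places. -/
def initMarking (N : Net α) : Set α := N.initPlaces

/-- Step sequences executable from the initial marking. -/
def sseq (N : Net α) : Set (List (Set α)) := {σ | ∃ M, StepSeqFrom N N.initMarking σ M}

/-- Mixed step sequences: alternating steps and resulting markings from a marking. -/
inductive MixFrom (N : Net α) : Set α → List (Set α × Set α) → Prop
  | nil (M : Set α) : MixFrom N M []
  | cons {M U M' l} : StepTrans N M U M' → MixFrom N M' l → MixFrom N M ((U, M') :: l)

/-- Mixed step sequences from the initial marking, represented as the initial marking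
paired with the list of consecutive (step, marking) pairs. -/
def mixsseq (N : Net α) : Set (Set α × List (Set α × Set α)) :=
  {p | p.1 = N.initMarking ∧ MixFrom N p.1 p.2}

/-- Markings reachable from the initial marking. -/
def reach (N : Net α) : Set (Set α) := {M | ∃ σ, StepSeqFrom N N.initMarking σ M}

/-- Firing sequences: step sequences all of whose steps are singletons. -/
def fseq (N : Net α) : Set (List (Set α)) :=
  {σ | σ ∈ N.sseq ∧ ∀ U ∈ σ, ∃ t, U = {t}}

/-- Maximal step sequences: no step can be appended. -/
def maxsseq (N : Net α) : Set (List (Set α)) :=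
  {σ | σ ∈ N.sseq ∧ ¬ ∃ U, σ ++ [U] ∈ N.sseq}

/-- Maximal mixed step sequences: no step and marking can be appended. -/
def maxmixsseq (N : Net α) : Set (Set α × List (Set α × Set α)) :=
  {p | p ∈ N.mixsseq ∧ ¬ ∃ U M, (p.1, p.2 ++ [(U, M)]) ∈ N.mixsseq}

/-- Final reachable markings: markings reached by maximal step sequences. -/
def finreach (N : Net α) : Set (Set α) :=
  {M | ∃ σ ∈ N.maxsseq, StepSeqFrom N N.initMarking σ M}

/-- A step sequence is well-formed if post-sets of distinct transitions in the same
step are disjoint, and post-sets of distinct steps are disjoint. -/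
def WellFormedSeq (N : Net α) (σ : List (Set α)) : Prop :=
  (∀ U ∈ σ, ∀ t ∈ U, ∀ u ∈ U, t ≠ u → N.post t ∩ N.post u = ∅) ∧
  σ.Pairwise (fun U V => N.postSet U ∩ N.postSet V = ∅)

/-- The set of transitions occurring in a step sequence. -/
def transOf (σ : List (Set α)) : Set α := {t | ∃ U ∈ σ, t ∈ U}

/-- A net is well-formed if each transition occurs in at least one step sequence and
all step sequences are well-formed. -/
def WellFormedNet (N : Net α) : Prop :=
  (∀ t ∈ N.transitions, ∃ σ ∈ N.sseq, t ∈ transOf σ) ∧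
  (∀ σ ∈ N.sseq, N.WellFormedSeq σ)

/-- Scenarios of a net: occurrence nets that are co-initial subnets of it. -/
def scenarios (N : Net α) : Set (Net α) :=
  {S | IsOccurrenceNet S ∧ CoInitial S N}

/-- Maximal scenarios: scenarios not strictly included (co-initially) in another scenario. -/
def maxscenarios (N : Net α) : Set (Net α) :=
  {S | S ∈ N.scenarios ∧ ¬ ∃ S', S' ∈ N.scenarios ∧ S' ≠ S ∧ CoInitial S S'}

/-- The scenario induced by a (well-formed) step sequence `σ`:
transitions are those occurring in `σ`, places are the initial places together with
the postsets of those transitions, and the flow is the restriction. -/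
def inducedScenario (N : Net α) (σ : List (Set α)) : Net α where
  places := N.initMarking ∪ N.postSet (transOf σ)
  transitions := transOf σ
  flow := fun x y => N.flow x y ∧
    ((x ∈ N.initMarking ∪ N.postSet (transOf σ) ∧ y ∈ transOf σ) ∨
     (x ∈ transOf σ ∧ y ∈ N.initMarking ∪ N.postSet (transOf σ)))

end Net

/-!
A step sequence `σ` that starts from the initial marking and produces no place twice also consumes
no place twice. Hence the transitions of `σ`, with their pre- and post-places, form an occurrence
net, which is a scenario executing `σ`. Conversely, an occurrence net executes only well-formed step
sequences, and executes each of its transitions since it can always fire a flow-minimal transition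
among those not yet fired. Passing from firing sequences back to step sequences uses that the
transitions of each step can be fired one after another; this may leave additional tokens behind,
but additional tokens disable nothing, and well-formedness depends only on which post-places occur.
-/

namespace Net

variable {α : Type*} {N S : Net α} {M M₁ M' U V : Set α} {σ τ : List (Set α)} {t p : α}

/-! ### Presets, postsets and occurring transitions -/

theorem mem_preSet : p ∈ N.preSet U ↔ ∃ t ∈ U, N.flow p t := by
  simp [preSet, pre]

theorem mem_postSet : p ∈ N.postSet U ↔ ∃ t ∈ U, N.flow t p := by
  simp [postSet, post]

theorem pre_subset_preSet (ht : t ∈ U) : N.pre t ⊆ N.preSet U :=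
  Set.subset_biUnion_of_mem ht

theorem post_subset_postSet (ht : t ∈ U) : N.post t ⊆ N.postSet U :=
  Set.subset_biUnion_of_mem ht

@[simp] theorem preSet_empty : N.preSet ∅ = ∅ := by simp [preSet]

@[simp] theorem postSet_empty : N.postSet ∅ = ∅ := by simp [postSet]

@[simp] theorem preSet_singleton : N.preSet {t} = N.pre t := by simp [preSet]

@[simp] theorem preSet_union : N.preSet (U ∪ V) = N.preSet U ∪ N.preSet V :=
  Set.biUnion_union U V N.pre

@[simp] theorem postSet_union : N.postSet (U ∪ V) = N.postSet U ∪ N.postSet V :=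
  Set.biUnion_union U V N.post

theorem disjoint_initMarking_postSet : Disjoint N.initMarking (N.postSet U) := by
  rw [Set.disjoint_left]
  intro p hp hpU
  obtain ⟨t, -, htp⟩ := mem_postSet.1 hpU
  exact Set.eq_empty_iff_forall_notMem.1 hp.2 t htp

@[simp] theorem transOf_nil : transOf ([] : List (Set α)) = ∅ := by simp [transOf]

@[simp] theorem transOf_append : transOf (σ ++ τ) = transOf σ ∪ transOf τ := by
  ext t
  simp [transOf, or_and_right, exists_or]

@[simp] theorem transOf_singleton : transOf [U] = U := by simp [transOf]

@[simp] theorem transOf_cons : transOf (U :: σ) = U ∪ transOf σ := by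
  rw [← List.singleton_append, transOf_append, transOf_singleton]

theorem postSet_transOf : N.postSet (transOf σ) = ⋃ U ∈ σ, N.postSet U := by
  ext p
  simp only [mem_postSet, transOf, Set.mem_ofPred_eq, Set.mem_iUnion, exists_prop]
  tauto

theorem subset_transOf (hU : U ∈ σ) : U ⊆ transOf σ := fun _ ht => ⟨U, hU, ht⟩

/-! ### Acyclic nets -/

namespace IsAcyclicNet

theorem finite_transitions (h : N.IsAcyclicNet) : N.transitions.Finite := h.2.1

theorem disjoint (h : N.IsAcyclicNet) : Disjoint N.places N.transitions := h.2.2.1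

theorem flow_bipartite (h : N.IsAcyclicNet) {x y : α} (hxy : N.flow x y) :
    (x ∈ N.places ∧ y ∈ N.transitions) ∨ (x ∈ N.transitions ∧ y ∈ N.places) :=
  h.2.2.2.1 x y hxy

theorem not_transGen_flow_self (h : N.IsAcyclicNet) (x : α) : ¬ Relation.TransGen N.flow x x :=
  h.2.2.2.2.2.1 x

theorem pre_nonempty (h : N.IsAcyclicNet) (ht : t ∈ N.transitions) : (N.pre t).Nonempty :=
  (h.2.2.2.2.2.2 t ht).1

theorem pre_subset_places (h : N.IsAcyclicNet) (ht : t ∈ N.transitions) : N.pre t ⊆ N.places :=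
  fun _ hp => (h.flow_bipartite hp).elim And.left
    fun hp' => (Set.disjoint_left.1 h.disjoint hp'.2 ht).elim

theorem post_subset_places (h : N.IsAcyclicNet) (ht : t ∈ N.transitions) : N.post t ⊆ N.places :=
  fun _ hp => (h.flow_bipartite hp).elim
    (fun hp' => (Set.disjoint_left.1 h.disjoint hp'.1 ht).elim) And.right

theorem pre_subset_transitions (h : N.IsAcyclicNet) (hp : p ∈ N.places) :
    N.pre p ⊆ N.transitions :=
  fun _ ht => (h.flow_bipartite ht).elim
    (fun ht' => (Set.disjoint_left.1 h.disjoint hp ht'.2).elim) And.left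

theorem post_subset_transitions (h : N.IsAcyclicNet) (hp : p ∈ N.places) :
    N.post p ⊆ N.transitions :=
  fun _ ht => (h.flow_bipartite ht).elim And.right
    fun ht' => (Set.disjoint_left.1 h.disjoint hp ht'.1).elim

theorem wellFounded_flow (h : N.IsAcyclicNet) : WellFounded N.flow := by
  have : IsStrictOrder α (Relation.TransGen N.flow) :=
    { irrefl := h.not_transGen_flow_self, trans := fun _ _ _ => Relation.TransGen.trans }
  have hwf : (N.places ∪ N.transitions).WellFoundedOn (Relation.TransGen N.flow) :=
    (h.1.union h.finite_transitions).wellFoundedOn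
  refine Subrelation.wf (fun {x y} hxy => ?_) (Set.wellFoundedOn_iff.1 hwf)
  rcases h.flow_bipartite hxy with ⟨hx, hy⟩ | ⟨hx, hy⟩
  · exact ⟨.single hxy, .inl hx, .inr hy⟩
  · exact ⟨.single hxy, .inr hx, .inl hy⟩

theorem initMarking_nonempty (h : N.IsAcyclicNet) : N.initMarking.Nonempty := by
  obtain ⟨p, hp, hmin⟩ := h.wellFounded_flow.transGen.has_min N.places h.2.2.2.2.1
  refine ⟨p, hp, Set.eq_empty_iff_forall_notMem.2 fun t htp => ?_⟩
  have ht : t ∈ N.transitions := h.pre_subset_transitions hp htp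
  obtain ⟨q, hqt⟩ := h.pre_nonempty ht
  exact hmin q (h.pre_subset_places ht hqt) (.tail (.single hqt) htp)

end IsAcyclicNet

/-! ### Step sequences and the token game -/

theorem enabled_singleton : N.Enabled M {t} ↔ t ∈ N.transitions ∧ N.pre t ⊆ M := by
  simp [Enabled, IsStep]

theorem IsStep.pairwiseDisjoint_pre (hU : N.IsStep U) : U.PairwiseDisjoint N.pre :=
  fun t ht u hu htu => Set.disjoint_iff_inter_eq_empty.2 (hU.2.2 t ht u hu htu)

namespace StepTrans

theorem subset_transitions (h : N.StepTrans M U M') : U ⊆ N.transitions := h.1.1.2.1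

theorem preSet_subset (h : N.StepTrans M U M') : N.preSet U ⊆ M := h.1.2

theorem mono (h : N.StepTrans M U M') (hM : M ⊆ M₁) : ∃ M₁', M' ⊆ M₁' ∧ N.StepTrans M₁ U M₁' := by
  refine ⟨_, ?_, ⟨h.1.1, h.preSet_subset.trans hM⟩, rfl⟩
  rw [h.2]
  gcongr

end StepTrans

theorem stepSeqFrom_singleton : N.StepSeqFrom M [U] M' ↔ N.StepTrans M U M' := by
  constructor
  · rintro (_ | ⟨hU, ⟨⟩⟩)
    exact hU
  · exact fun hU => .cons hU (.nil M')

theorem stepSeqFrom_append :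
    N.StepSeqFrom M (σ ++ τ) M' ↔ ∃ M₁, N.StepSeqFrom M σ M₁ ∧ N.StepSeqFrom M₁ τ M' := by
  constructor
  · intro h
    induction σ generalizing M with
    | nil => exact ⟨M, .nil M, h⟩
    | cons U σ ih =>
      obtain _ | ⟨hU, hστ⟩ := h
      obtain ⟨M₁, hσ, hτ⟩ := ih hστ
      exact ⟨M₁, .cons hU hσ, hτ⟩
  · rintro ⟨M₁, hσ, hτ⟩
    induction hσ with
    | nil => exact hτ
    | cons hU _ ih => exact .cons hU (ih hτ)

namespace StepSeqFrom

theorem transOf_subset (h : N.StepSeqFrom M σ M') : transOf σ ⊆ N.transitions := by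
  induction h with
  | nil => simp
  | cons hU _ ih => simp [hU.subset_transitions, ih]

theorem subset_union_postSet (h : N.StepSeqFrom M σ M') : M' ⊆ M ∪ N.postSet (transOf σ) := by
  induction h with
  | nil => simp
  | cons hU _ ih =>
    rw [hU.2] at ih
    rw [transOf_cons, postSet_union]
    grind

theorem union_postSet_sdiff_preSet_subset (h : N.StepSeqFrom M σ M') :
    (M ∪ N.postSet (transOf σ)) \ N.preSet (transOf σ) ⊆ M' := by
  induction h with
  | nil => simp
  | cons hU _ ih =>
    rw [hU.2] at ih
    rw [transOf_cons, postSet_union, preSet_union]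
    grind

theorem preSet_subset_union_postSet (h : N.StepSeqFrom M σ M') :
    N.preSet (transOf σ) ⊆ M ∪ N.postSet (transOf σ) := by
  induction h with
  | nil => simp
  | cons hU _ ih =>
    rw [hU.2] at ih
    rw [transOf_cons, postSet_union, preSet_union, ← Set.union_assoc]
    exact Set.union_subset
      (hU.preSet_subset.trans (Set.subset_union_left.trans Set.subset_union_left))
      (ih.trans (Set.union_subset_union_left _ Set.sdiff_subset))

theorem mono (h : N.StepSeqFrom M σ M') (hM : M ⊆ M₁) :
    ∃ M₁', M' ⊆ M₁' ∧ N.StepSeqFrom M₁ σ M₁' := by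
  induction h generalizing M₁ with
  | nil => exact ⟨M₁, hM, .nil M₁⟩
  | cons hU _ ih =>
    obtain ⟨M₂, hM₂, hU₁⟩ := hU.mono hM
    obtain ⟨M₁', hM₁', hσ₁⟩ := ih hM₂
    exact ⟨M₁', hM₁', .cons hU₁ hσ₁⟩

end StepSeqFrom

theorem transOf_subset_of_mem_sseq (hσ : σ ∈ N.sseq) : transOf σ ⊆ N.transitions :=
  hσ.elim fun _ h => h.transOf_subset

/-! ### Well-formed step sequences -/

theorem wellFormedSeq_singleton : N.WellFormedSeq [U] ↔ U.PairwiseDisjoint N.post := by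
  simp [WellFormedSeq, Set.PairwiseDisjoint, Set.Pairwise, Function.onFun,
    Set.disjoint_iff_inter_eq_empty]

theorem wellFormedSeq_append :
    N.WellFormedSeq (σ ++ τ) ↔ N.WellFormedSeq σ ∧ N.WellFormedSeq τ ∧
      Disjoint (N.postSet (transOf σ)) (N.postSet (transOf τ)) := by
  have hdisj : Disjoint (N.postSet (transOf σ)) (N.postSet (transOf τ)) ↔
      ∀ U ∈ σ, ∀ V ∈ τ, N.postSet U ∩ N.postSet V = ∅ := by
    simp_rw [postSet_transOf (σ := σ), Set.disjoint_iUnion₂_left, postSet_transOf,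
      Set.disjoint_iUnion₂_right, Set.disjoint_iff_inter_eq_empty]
  rw [hdisj, WellFormedSeq, List.pairwise_append, List.forall_mem_append, WellFormedSeq,
    WellFormedSeq]
  tauto

theorem wellFormedSeq_cons :
    N.WellFormedSeq (U :: σ) ↔ U.PairwiseDisjoint N.post ∧ N.WellFormedSeq σ ∧
      Disjoint (N.postSet U) (N.postSet (transOf σ)) := by
  rw [← List.singleton_append, wellFormedSeq_append, wellFormedSeq_singleton, transOf_singleton]

theorem WellFormedSeq.pairwiseDisjoint_post (h : N.WellFormedSeq σ) :
    (transOf σ).PairwiseDisjoint N.post := by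
  induction σ with
  | nil => simp
  | cons U σ ih =>
    obtain ⟨hU, hσ, hdisj⟩ := wellFormedSeq_cons.1 h
    rw [transOf_cons]
    exact hU.union (ih hσ) fun t ht u hu _ =>
      hdisj.mono (post_subset_postSet ht) (post_subset_postSet hu)

theorem StepTrans.disjoint_preSet_union (h : N.StepTrans M U M') (hV : Disjoint M V) :
    Disjoint (N.preSet U) (M' ∪ V) := by
  rw [Set.disjoint_union_right, h.2]
  exact ⟨Set.disjoint_sdiff_right, hV.mono_left h.preSet_subset⟩

theorem StepTrans.disjoint_postSet_transOf (h : N.StepTrans M U M')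
    (hw : N.WellFormedSeq (U :: σ)) (hM : Disjoint M (N.postSet (transOf (U :: σ)))) :
    Disjoint M' (N.postSet (transOf σ)) := by
  rw [transOf_cons, postSet_union, Set.disjoint_union_right] at hM
  rw [h.2]
  exact (hM.2.union_left (wellFormedSeq_cons.1 hw).2.2).mono_left Set.sdiff_subset

namespace StepSeqFrom

theorem disjoint_preSet (h : N.StepSeqFrom M σ M') (hw : N.WellFormedSeq σ)
    (hM : Disjoint M (N.postSet (transOf σ))) : Disjoint M' (N.preSet (transOf σ)) := by
  induction h with
  | nil => simp
  | cons hU hσ ih =>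
    have hM₁ := hU.disjoint_postSet_transOf hw hM
    rw [transOf_cons, postSet_union, Set.disjoint_union_right] at hM
    rw [transOf_cons, preSet_union, Set.disjoint_union_right]
    exact ⟨((hU.disjoint_preSet_union hM.2).mono_right hσ.subset_union_postSet).symm,
      ih (wellFormedSeq_cons.1 hw).2.1 hM₁⟩

theorem pairwiseDisjoint_pre (h : N.StepSeqFrom M σ M') (hw : N.WellFormedSeq σ)
    (hM : Disjoint M (N.postSet (transOf σ))) : (transOf σ).PairwiseDisjoint N.pre := by
  induction h with
  | nil => simp
  | cons hU hσ ih =>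
    have hM₁ := hU.disjoint_postSet_transOf hw hM
    rw [transOf_cons, postSet_union, Set.disjoint_union_right] at hM
    have hdisj := (hU.disjoint_preSet_union hM.2).mono_right hσ.preSet_subset_union_postSet
    rw [transOf_cons]
    exact hU.1.1.pairwiseDisjoint_pre.union (ih (wellFormedSeq_cons.1 hw).2.1 hM₁)
      fun t ht u hu _ => hdisj.mono (pre_subset_preSet ht) (pre_subset_preSet hu)

end StepSeqFrom

/-! ### Subnets -/

namespace IsSubnet

theorem places_subset (hS : S.IsSubnet N) : S.places ⊆ N.places := hS.2.1

theorem transitions_subset (hS : S.IsSubnet N) : S.transitions ⊆ N.transitions := hS.2.2.1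

theorem flow_iff (hS : S.IsSubnet N) {x y : α} : S.flow x y ↔ N.flow x y ∧
    ((x ∈ S.places ∧ y ∈ S.transitions) ∨ (x ∈ S.transitions ∧ y ∈ S.places)) :=
  hS.2.2.2.1 x y

theorem pre_eq (hS : S.IsSubnet N) (ht : t ∈ S.transitions) : S.pre t = N.pre t :=
  (hS.2.2.2.2 t ht).1

theorem post_eq (hS : S.IsSubnet N) (ht : t ∈ S.transitions) : S.post t = N.post t :=
  (hS.2.2.2.2 t ht).2

theorem preSet_eq (hS : S.IsSubnet N) (hU : U ⊆ S.transitions) : S.preSet U = N.preSet U :=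
  Set.iUnion₂_congr fun _ ht => hS.pre_eq (hU ht)

theorem postSet_eq (hS : S.IsSubnet N) (hU : U ⊆ S.transitions) : S.postSet U = N.postSet U :=
  Set.iUnion₂_congr fun _ ht => hS.post_eq (hU ht)

theorem isAcyclicNet (hS : S.IsSubnet N) (h : N.IsAcyclicNet) : S.IsAcyclicNet := by
  refine ⟨h.1.subset hS.places_subset, h.finite_transitions.subset hS.transitions_subset,
    h.disjoint.mono hS.places_subset hS.transitions_subset, fun x y hxy => (hS.flow_iff.1 hxy).2,
    hS.1, fun x hx => ?_, fun t ht => ?_⟩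
  · exact h.not_transGen_flow_self x
      (Relation.TransGen.mono (fun _ _ hab => (hS.flow_iff.1 hab).1) _ _ hx)
  · rw [hS.pre_eq ht, hS.post_eq ht]
    exact h.2.2.2.2.2.2 t (hS.transitions_subset ht)

theorem isStep_iff (hS : S.IsSubnet N) (hU : U ⊆ S.transitions) : S.IsStep U ↔ N.IsStep U := by
  have hpre : (∀ t ∈ U, ∀ u ∈ U, t ≠ u → S.pre t ∩ S.pre u = ∅) ↔
      ∀ t ∈ U, ∀ u ∈ U, t ≠ u → N.pre t ∩ N.pre u = ∅ :=
    forall₄_congr fun t ht u hu => by rw [hS.pre_eq (hU ht), hS.pre_eq (hU hu)]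
  simp only [IsStep, hpre, hU, hU.trans hS.transitions_subset]

theorem stepTrans_iff (hS : S.IsSubnet N) (hU : U ⊆ S.transitions) :
    S.StepTrans M U M' ↔ N.StepTrans M U M' := by
  simp only [StepTrans, Enabled, hS.isStep_iff hU, hS.preSet_eq hU, hS.postSet_eq hU]

theorem stepSeqFrom_iff (hS : S.IsSubnet N) (hσ : transOf σ ⊆ S.transitions) :
    S.StepSeqFrom M σ M' ↔ N.StepSeqFrom M σ M' := by
  induction σ generalizing M with
  | nil => constructor <;> (rintro ⟨⟩; exact .nil _)
  | cons U σ ih =>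
    rw [transOf_cons, Set.union_subset_iff] at hσ
    constructor
    · rintro (_ | ⟨hU, h⟩)
      exact .cons ((hS.stepTrans_iff hσ.1).1 hU) ((ih hσ.2).1 h)
    · rintro (_ | ⟨hU, h⟩)
      exact .cons ((hS.stepTrans_iff hσ.1).2 hU) ((ih hσ.2).2 h)

theorem wellFormedSeq_of_wellFormedSeq (hS : S.IsSubnet N) (hσ : transOf σ ⊆ S.transitions)
    (hw : S.WellFormedSeq σ) : N.WellFormedSeq σ := by
  have hU {U : Set α} (hU : U ∈ σ) : U ⊆ S.transitions := (subset_transOf hU).trans hσ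
  constructor
  · intro U hUσ t ht u hu htu
    rw [← hS.post_eq (hU hUσ ht), ← hS.post_eq (hU hUσ hu)]
    exact hw.1 U hUσ t ht u hu htu
  · refine hw.2.imp_of_mem fun {U V} hUσ hVσ hUV => ?_
    rwa [← hS.postSet_eq (hU hUσ), ← hS.postSet_eq (hU hVσ)]

end IsSubnet

theorem CoInitial.mem_sseq_iff (hS : S.CoInitial N) (hσ : transOf σ ⊆ S.transitions) :
    σ ∈ S.sseq ↔ σ ∈ N.sseq := by
  have hinit : S.initMarking = N.initMarking := hS.2
  simp only [sseq, Set.mem_ofPred_eq, hinit, hS.1.stepSeqFrom_iff hσ]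

/-! ### Occurrence nets -/

theorem isOccurrenceNet_iff : S.IsOccurrenceNet ↔ S.IsAcyclicNet ∧
    S.transitions.PairwiseDisjoint S.pre ∧ S.transitions.PairwiseDisjoint S.post := by
  refine and_congr_right fun hS => ⟨fun h => ⟨fun t ht u _ htu => ?_, fun t ht u _ htu => ?_⟩,
    fun ⟨hpre, hpost⟩ p hp => ⟨fun t ht u hu => ?_, fun t ht u hu => ?_⟩⟩
  · exact Set.disjoint_left.2 fun p hpt hpu => htu ((h p (hS.pre_subset_places ht hpt)).2 hpt hpu)
  · exact Set.disjoint_left.2 fun p htp hup => htu ((h p (hS.post_subset_places ht htp)).1 htp hup)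
  · exact hpost.elim_set (hS.pre_subset_transitions hp ht) (hS.pre_subset_transitions hp hu) p ht hu
  · exact hpre.elim_set (hS.post_subset_transitions hp ht) (hS.post_subset_transitions hp hu) p
      ht hu

namespace IsOccurrenceNet

theorem wellFormedSeq (hS : S.IsOccurrenceNet) (hσ : σ ∈ S.sseq) : S.WellFormedSeq σ := by
  obtain ⟨M', hσ⟩ := hσ
  induction σ using List.reverseRecOn generalizing M' with
  | nil => simp [WellFormedSeq]
  | append_singleton σ U ih =>
    obtain ⟨M, hσ, hU⟩ := stepSeqFrom_append.1 hσ
    rw [stepSeqFrom_singleton] at hU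
    have hpost := (isOccurrenceNet_iff.1 hS).2.2
    have hw := ih M hσ
    -- A repeated transition would need a token on a pre-place that its first occurrence consumed.
    have hfresh : Disjoint (transOf σ) U := Set.disjoint_left.2 fun t ht htU => by
      obtain ⟨p, hp⟩ := hS.1.pre_nonempty (hU.subset_transitions htU)
      exact Set.disjoint_left.1 (hσ.disjoint_preSet hw disjoint_initMarking_postSet)
        (hU.preSet_subset (pre_subset_preSet htU hp)) (pre_subset_preSet ht hp)
    refine wellFormedSeq_append.2
      ⟨hw, wellFormedSeq_singleton.2 (hpost.subset hU.subset_transitions), ?_⟩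
    rw [transOf_singleton]
    exact Set.disjoint_iUnion₂_left.2 fun t ht => Set.disjoint_iUnion₂_right.2 fun u hu =>
      hpost (hσ.transOf_subset ht) (hU.subset_transitions hu) fun htu =>
        Set.disjoint_left.1 hfresh ht (htu ▸ hu)

theorem exists_enabled (hS : S.IsOccurrenceNet) (hσ : S.StepSeqFrom S.initMarking σ M)
    (hne : (S.transitions \ transOf σ).Nonempty) :
    ∃ t ∈ S.transitions \ transOf σ, S.Enabled M {t} := by
  obtain ⟨t, ⟨ht, htσ⟩, hmin⟩ := hS.1.wellFounded_flow.transGen.has_min _ hne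
  refine ⟨t, ⟨ht, htσ⟩, enabled_singleton.2 ⟨ht, fun p hpt => ?_⟩⟩
  have hp : p ∈ S.places := hS.1.pre_subset_places ht hpt
  have produced : p ∈ S.initMarking ∪ S.postSet (transOf σ) := by
    by_cases hinit : S.pre p = ∅
    · exact .inl ⟨hp, hinit⟩
    · obtain ⟨u, hup⟩ := Set.nonempty_iff_ne_empty.2 hinit
      by_contra hcon
      refine hmin u ⟨hS.1.pre_subset_transitions hp hup, fun hu => hcon (.inr ?_)⟩
        (.tail (.single hup) hpt)
      exact post_subset_postSet hu hup
  have not_consumed : p ∉ S.preSet (transOf σ) := fun hpσ => by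
    obtain ⟨u, hu, hpu⟩ := mem_preSet.1 hpσ
    exact htσ ((hS.2 p hp).2 hpu hpt ▸ hu)
  exact hσ.union_postSet_sdiff_preSet_subset ⟨produced, not_consumed⟩

theorem exists_mem_sseq_transOf_eq (hS : S.IsOccurrenceNet) :
    ∃ σ ∈ S.sseq, transOf σ = S.transitions := by
  have hfin : (transOf '' S.sseq).Finite := hS.1.finite_transitions.finite_subsets.subset <| by
    rintro _ ⟨σ, hσ, rfl⟩
    exact transOf_subset_of_mem_sseq hσ
  obtain ⟨σ, ⟨M, hσ⟩, hmax⟩ := hfin.exists_maximalFor' transOf S.sseq ⟨[], _, .nil _⟩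
  refine ⟨σ, ⟨M, hσ⟩, hσ.transOf_subset.antisymm (Set.sdiff_eq_empty.1 ?_)⟩
  by_contra hne
  obtain ⟨t, ⟨-, htσ⟩, ht⟩ := hS.exists_enabled hσ (Set.nonempty_iff_ne_empty.2 hne)
  have hσt : σ ++ [{t}] ∈ S.sseq :=
    ⟨_, stepSeqFrom_append.2 ⟨M, hσ, stepSeqFrom_singleton.2 ⟨ht, rfl⟩⟩⟩
  exact htσ (hmax hσt (by simp) (by simp))

end IsOccurrenceNet

/-! ### The scenario of a well-formed step sequence -/

theorem isSubnet_inducedScenario (h : N.IsAcyclicNet) (hσ : σ ∈ N.sseq) :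
    (N.inducedScenario σ).IsSubnet N := by
  obtain ⟨M, hσ⟩ := hσ
  refine ⟨h.initMarking_nonempty.inl, ?_, hσ.transOf_subset, fun _ _ => Iff.rfl,
    fun t ht => ⟨?_, ?_⟩⟩
  · refine Set.union_subset (fun p hp => hp.1) (Set.iUnion₂_subset fun t ht => ?_)
    exact h.post_subset_places (hσ.transOf_subset ht)
  · refine Set.Subset.antisymm (fun p hp => hp.1) fun p hp => ⟨hp, .inl ⟨?_, ht⟩⟩
    exact hσ.preSet_subset_union_postSet (pre_subset_preSet ht hp)
  · refine Set.Subset.antisymm (fun p hp => hp.1) fun p hp => ⟨hp, .inr ⟨ht, .inr ?_⟩⟩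
    exact post_subset_postSet ht hp

theorem initPlaces_inducedScenario : (N.inducedScenario σ).initPlaces = N.initPlaces := by
  ext p
  constructor
  · rintro ⟨hp | hp, hpre⟩
    · exact hp
    · obtain ⟨t, ht, htp⟩ := mem_postSet.1 hp
      exact (Set.eq_empty_iff_forall_notMem.1 hpre t ⟨htp, .inr ⟨ht, .inr hp⟩⟩).elim
  · exact fun hp => ⟨.inl hp, Set.eq_empty_iff_forall_notMem.2 fun t ht =>
      Set.eq_empty_iff_forall_notMem.1 hp.2 t ht.1⟩

theorem IsSubnet.isOccurrenceNet (hS : S.IsSubnet N) (h : N.IsAcyclicNet)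
    (hpre : S.transitions.PairwiseDisjoint N.pre) (hpost : S.transitions.PairwiseDisjoint N.post) :
    S.IsOccurrenceNet := by
  refine isOccurrenceNet_iff.2 ⟨hS.isAcyclicNet h, fun t ht u hu htu => ?_, fun t ht u hu htu => ?_⟩
  · rw [Function.onFun, hS.pre_eq ht, hS.pre_eq hu]
    exact hpre ht hu htu
  · rw [Function.onFun, hS.post_eq ht, hS.post_eq hu]
    exact hpost ht hu htu

theorem inducedScenario_mem_scenarios (h : N.IsAcyclicNet) (hσ : σ ∈ N.sseq)
    (hw : N.WellFormedSeq σ) : N.inducedScenario σ ∈ N.scenarios := by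
  have hsub := isSubnet_inducedScenario h hσ
  have hpre : (transOf σ).PairwiseDisjoint N.pre :=
    hσ.elim fun _ hM => hM.pairwiseDisjoint_pre hw disjoint_initMarking_postSet
  exact ⟨hsub.isOccurrenceNet h hpre hw.pairwiseDisjoint_post, hsub, initPlaces_inducedScenario⟩

theorem mem_sseq_inducedScenario (h : N.IsAcyclicNet) (hσ : σ ∈ N.sseq) :
    σ ∈ (N.inducedScenario σ).sseq :=
  (CoInitial.mem_sseq_iff ⟨isSubnet_inducedScenario h hσ, initPlaces_inducedScenario⟩
    subset_rfl).2 hσ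

/-! ### Linearizations -/

/-- `IsLinearization σ τ` says that `τ` replaces each step `U` of `σ` by a sequence of singleton
steps whose transitions are exactly those of `U`. Repetitions are not excluded. It is used to derive
the well-formedness of a step sequence from that of a firing sequence. -/
inductive IsLinearization : List (Set α) → List (Set α) → Prop
  | nil : IsLinearization [] []
  | cons {U : Set α} {σ υ τ : List (Set α)} (hυ : ∀ V ∈ υ, ∃ t, V = {t}) (hU : transOf υ = U)
      (h : IsLinearization σ τ) : IsLinearization (U :: σ) (υ ++ τ)

namespace IsLinearization

theorem exists_eq_singleton (h : IsLinearization σ τ) : ∀ V ∈ τ, ∃ t, V = {t} := by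
  induction h with
  | nil => simp
  | cons hυ _ _ ih => exact List.forall_mem_append.2 ⟨hυ, ih⟩

theorem transOf_eq (h : IsLinearization σ τ) : transOf τ = transOf σ := by
  induction h with
  | nil => rfl
  | cons _ hU _ ih => rw [transOf_append, transOf_cons, hU, ih]

theorem wellFormedSeq (h : IsLinearization σ τ) (hw : N.WellFormedSeq τ) : N.WellFormedSeq σ := by
  induction h with
  | nil => exact hw
  | cons _ hU hτ ih =>
    obtain ⟨hwυ, hwτ, hdisj⟩ := wellFormedSeq_append.1 hw
    rw [hU, hτ.transOf_eq] at hdisj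
    exact wellFormedSeq_cons.2 ⟨hU ▸ hwυ.pairwiseDisjoint_post, ih hwτ, hdisj⟩

end IsLinearization

/- Only an inclusion holds in the conclusion: a place in both the preset and the postset of `U` is
unmarked by the step `U`, but remains marked if its producer fires after its consumer. -/
theorem exists_singletons_stepSeqFrom (hfin : U.Finite) (hU : U ⊆ N.transitions)
    (hdisj : U.PairwiseDisjoint N.pre) (hM : N.preSet U ⊆ M) :
    ∃ υ M', (∀ V ∈ υ, ∃ t, V = {t}) ∧ transOf υ = U ∧ N.StepSeqFrom M υ M' ∧
      (M ∪ N.postSet U) \ N.preSet U ⊆ M' := by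
  induction U, hfin using Set.Finite.induction_on with
  | empty => exact ⟨[], M, by simp, by simp, .nil M, by simp⟩
  | @insert t U htU _ ih =>
    rw [Set.insert_eq, preSet_union, preSet_singleton, Set.union_subset_iff] at hM
    obtain ⟨υ, M₁, hυ, rfl, hM₁, hsub⟩ :=
      ih ((Set.subset_insert t U).trans hU) (hdisj.subset (Set.subset_insert t U)) hM.2
    have hpre : Disjoint (N.pre t) (N.preSet (transOf υ)) :=
      Set.disjoint_iUnion₂_right.2 fun u hu =>
        hdisj (.inl rfl) (.inr hu) (ne_of_mem_of_not_mem hu htU).symm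
    have ht : N.Enabled M₁ {t} := enabled_singleton.2 ⟨hU (.inl rfl), fun p hp =>
      hsub ⟨.inl (hM.1 hp), Set.disjoint_left.1 hpre hp⟩⟩
    refine ⟨υ ++ [{t}], _, ?_, ?_,
      stepSeqFrom_append.2 ⟨M₁, hM₁, stepSeqFrom_singleton.2 ⟨ht, rfl⟩⟩, ?_⟩
    · simpa [or_imp, forall_and] using hυ
    · rw [transOf_append, transOf_singleton, Set.union_comm, Set.insert_eq]
    · rw [Set.insert_eq, preSet_union, postSet_union]
      grind

theorem StepSeqFrom.exists_isLinearization (hfin : N.transitions.Finite)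
    (hσ : N.StepSeqFrom M σ M') : ∃ τ M₁, IsLinearization σ τ ∧ N.StepSeqFrom M τ M₁ ∧ M' ⊆ M₁ := by
  induction hσ with
  | nil M => exact ⟨[], M, .nil, .nil M, subset_rfl⟩
  | cons hU _ ih =>
    obtain ⟨υ, M₁, hυ, hυU, hM₁, hsub⟩ := exists_singletons_stepSeqFrom
      (hfin.subset hU.subset_transitions) hU.subset_transitions hU.1.1.pairwiseDisjoint_pre
      hU.preSet_subset
    obtain ⟨τ, M₂, hτ, hM₂, hsub₂⟩ := ih
    obtain ⟨M₃, hM₃, hτ₃⟩ := hM₂.mono (hU.2.trans_subset hsub)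
    exact ⟨υ ++ τ, M₃, .cons hυ hυU hτ, stepSeqFrom_append.2 ⟨M₁, hM₁, hτ₃⟩, hsub₂.trans hM₃⟩

theorem exists_isLinearization_mem_fseq (hfin : N.transitions.Finite) (hσ : σ ∈ N.sseq) :
    ∃ τ ∈ N.fseq, IsLinearization σ τ := by
  obtain ⟨M, hσ⟩ := hσ
  obtain ⟨τ, M₁, hτ, hM₁, -⟩ := hσ.exists_isLinearization hfin
  exact ⟨τ, ⟨⟨M₁, hM₁⟩, hτ.exists_eq_singleton⟩, hτ⟩

/-! ### Well-formedness and scenarios -/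

theorem wellFormedSeq_of_mem_scenarios (hS : S ∈ N.scenarios) (hσ : σ ∈ S.sseq) :
    N.WellFormedSeq σ :=
  hS.2.1.wellFormedSeq_of_wellFormedSeq (transOf_subset_of_mem_sseq hσ) (hS.1.wellFormedSeq hσ)

theorem exists_mem_sseq_of_mem_scenarios (hS : S ∈ N.scenarios) (ht : t ∈ S.transitions) :
    ∃ σ ∈ N.sseq, t ∈ transOf σ := by
  obtain ⟨σ, hσ, hσS⟩ := hS.1.exists_mem_sseq_transOf_eq
  exact ⟨σ, (hS.2.mem_sseq_iff hσS.subset).1 hσ, hσS ▸ ht⟩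

theorem wellFormedNet_of_scenarios (hfin : N.transitions.Finite)
    (htrans : ∀ t ∈ N.transitions, ∃ S ∈ N.scenarios, t ∈ S.transitions)
    (hfseq : ∀ σ ∈ N.fseq, ∃ S ∈ N.scenarios, σ ∈ S.fseq) : N.WellFormedNet := by
  refine ⟨fun t ht => ?_, fun σ hσ => ?_⟩
  · obtain ⟨S, hS, htS⟩ := htrans t ht
    exact exists_mem_sseq_of_mem_scenarios hS htS
  · obtain ⟨τ, hτ, hlin⟩ := exists_isLinearization_mem_fseq hfin hσ
    obtain ⟨S, hS, hτS⟩ := hfseq τ hτ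
    exact hlin.wellFormedSeq (wellFormedSeq_of_mem_scenarios hS hτS.1)

theorem WellFormedNet.exists_scenario (hw : N.WellFormedNet) (h : N.IsAcyclicNet)
    (hσ : σ ∈ N.sseq) : ∃ S ∈ N.scenarios, σ ∈ S.sseq :=
  ⟨_, inducedScenario_mem_scenarios h hσ (hw.2 σ hσ), mem_sseq_inducedScenario h hσ⟩

end Net

/-- For an acyclic net, the following are equivalent: (1) it is
well-formed; (2) each transition occurs in a scenario and each step sequence is a step
sequence of a scenario; (3) each transition occurs in a scenario and each firing
sequence is a firing sequence of a scenario. -/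
theorem stmt15 {α : Type*} (N : Net α) (h : N.IsAcyclicNet) :
    (N.WellFormedNet ↔
      ((∀ t ∈ N.transitions, ∃ S ∈ N.scenarios, t ∈ S.transitions) ∧
       (∀ σ ∈ N.sseq, ∃ S ∈ N.scenarios, σ ∈ S.sseq))) ∧
    (N.WellFormedNet ↔
      ((∀ t ∈ N.transitions, ∃ S ∈ N.scenarios, t ∈ S.transitions) ∧
       (∀ σ ∈ N.fseq, ∃ S ∈ N.scenarios, σ ∈ S.fseq))) := by
  have transition_of_wellFormed (hw : N.WellFormedNet) :
      ∀ t ∈ N.transitions, ∃ S ∈ N.scenarios, t ∈ S.transitions := fun t ht => by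
    obtain ⟨σ, hσ, htσ⟩ := hw.1 t ht
    obtain ⟨S, hS, hσS⟩ := hw.exists_scenario h hσ
    exact ⟨S, hS, Net.transOf_subset_of_mem_sseq hσS htσ⟩
  have fseq_of_sseq (hsseq : ∀ σ ∈ N.sseq, ∃ S ∈ N.scenarios, σ ∈ S.sseq) :
      ∀ σ ∈ N.fseq, ∃ S ∈ N.scenarios, σ ∈ S.fseq := fun σ hσ => by
    obtain ⟨S, hS, hσS⟩ := hsseq σ hσ.1
    exact ⟨S, hS, hσS, hσ.2⟩
  have wellFormed_of_fseq := Net.wellFormedNet_of_scenarios h.finite_transitions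
  exact ⟨⟨fun hw => ⟨transition_of_wellFormed hw, fun _ => hw.exists_scenario h⟩,
      fun ⟨htrans, hsseq⟩ => wellFormed_of_fseq htrans (fseq_of_sseq hsseq)⟩,
    ⟨fun hw => ⟨transition_of_wellFormed hw, fseq_of_sseq fun _ => hw.exists_scenario h⟩,
      fun ⟨htrans, hfseq⟩ => wellFormed_of_fseq htrans hfseq⟩⟩
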